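/- Let P be symmetric, stochastic, irreducible and positive semi-definite, Q = I_m − P, σ = min{1, n^{2/p−1}}, τ > 0, and suppose x⋆ ∈ (ℝⁿ)^m is consensual (x_i⋆ = x_j⋆ for all i,j) with each x_i⋆, x_i^t ∈ X. With μ^t − μ^{t−1} = τ(Q ⊗ I_n)x^t, one has Σ_i ‖x_i^t − x_i⋆‖_p² − (σ/τ²)‖μ^t − μ^{t−1}‖₂² ≥ 0. -/

import Mathlib

/-- The `ℓ_p` norm of a vector in `ℝⁿ`. -/
noncomputable def lpNorm {n : ℕ} (p : ENNReal) [Fact (1 ≤ p)]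
    (w : Fin n → ℝ) : ℝ :=
  ‖(WithLp.equiv p (Fin n → ℝ)).symm w‖


lemma aux_quad_le {m : ℕ} (P : Matrix (Fin m) (Fin m) ℝ)
    (hsym : P.IsSymm) (hnn : ∀ i j, 0 ≤ P i j)
    (hrow : ∀ i, ∑ j, P i j = 1) (z : Fin m → ℝ) :
    ∑ i, z i * ∑ j, P i j * z j ≤ ∑ i, z i ^ 2 := by
  have h1 : ∑ i, ∑ j, P i j * z i ^ 2 = ∑ i, z i ^ 2 := by
    refine Finset.sum_congr rfl fun i _ => ?_
    rw [← Finset.sum_mul, hrow, one_mul]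
  have h2 : ∑ i, ∑ j, P i j * z j ^ 2 = ∑ i, z i ^ 2 := by
    rw [Finset.sum_comm, ← h1]
    refine Finset.sum_congr rfl fun i _ => Finset.sum_congr rfl fun j _ => ?_
    rw [hsym.apply]
  have h3 : ∑ i, z i * ∑ j, P i j * z j
      ≤ ∑ i, ∑ j, (P i j * z i ^ 2 / 2 + P i j * z j ^ 2 / 2) := by
    refine Finset.sum_le_sum fun i _ => ?_
    rw [Finset.mul_sum]
    refine Finset.sum_le_sum fun j _ => ?_
    nlinarith [mul_nonneg (hnn i j) (sq_nonneg (z i - z j))]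
  simp only [Finset.sum_add_distrib, ← Finset.sum_div, h1, h2] at h3
  linarith

lemma aux_contract {m : ℕ} (P : Matrix (Fin m) (Fin m) ℝ)
    (hsym : P.IsSymm) (hnn : ∀ i j, 0 ≤ P i j)
    (hrow : ∀ i, ∑ j, P i j = 1) (hpsd : P.PosSemidef) (y : Fin m → ℝ) :
    ∑ i, (y i - ∑ j, P i j * y j) ^ 2 ≤ ∑ i, y i ^ 2 := by
  have hq : ∀ v : Fin m → ℝ, 0 ≤ v ⬝ᵥ (P.mulVec v) := fun v => by
    simpa using hpsd.dotProduct_mulVec_nonneg v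
  set z := P.mulVec y with hz
  have e : ∀ i, ∑ j, P i j * y j = z i := fun i => rfl
  simp only [e]
  have h1 := hq (y - z)
  have h0 := hq y
  have hzz : z ⬝ᵥ (P.mulVec z) ≤ z ⬝ᵥ z := by
    have := aux_quad_le P hsym hnn hrow z
    simpa [dotProduct, Matrix.mulVec, sq] using this
  have hyz : y ⬝ᵥ (P.mulVec z) = z ⬝ᵥ z := by
    rw [Matrix.dotProduct_mulVec, ← Matrix.mulVec_transpose, hsym.eq]
  rw [Matrix.mulVec_sub, sub_dotProduct, dotProduct_sub, dotProduct_sub, hyz, ← hz] at h1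
  rw [← hz] at h0
  have : ∑ i, (y i - z i) ^ 2 = ∑ i, y i ^ 2 - 2 * (y ⬝ᵥ z) + z ⬝ᵥ z := by
    simp only [dotProduct, Finset.mul_sum, ← Finset.sum_sub_distrib, ← Finset.sum_add_distrib]
    refine Finset.sum_congr rfl fun i _ => by ring
  rw [this]
  linarith

lemma aux_norm {n : ℕ} (p : ENNReal) [Fact (1 ≤ p)] (w : Fin n → ℝ) :
    min 1 ((n : ℝ) ^ (2 / p.toReal - 1)) * ∑ l, w l ^ 2 ≤ lpNorm p w ^ 2 := by
  have hS : 0 ≤ ∑ l, w l ^ 2 := Finset.sum_nonneg fun l _ => sq_nonneg _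
  rcases Nat.eq_zero_or_pos n with rfl | hn
  · simp [sq_nonneg]
  have hn' : (0 : ℝ) < n := by exact_mod_cast hn
  have hN0 : 0 ≤ lpNorm p w := norm_nonneg _
  have hc : ∀ l, |w l| ≤ lpNorm p w := fun l => by
    have := PiLp.norm_apply_le ((WithLp.equiv p (Fin n → ℝ)).symm w) l
    simpa [lpNorm] using this
  by_cases hp : p = ⊤
  · subst hp
    have hb : ∑ l, w l ^ 2 ≤ n * lpNorm ⊤ w ^ 2 := by
      calc ∑ l, w l ^ 2 ≤ ∑ l : Fin n, lpNorm ⊤ w ^ 2 :=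
            Finset.sum_le_sum fun l _ => by
              rw [← sq_abs]; exact pow_le_pow_left₀ (abs_nonneg _) (hc l) 2
        _ = _ := by simp
    calc _ ≤ (n : ℝ) ^ (2 / (⊤ : ENNReal).toReal - 1) * ∑ l, w l ^ 2 :=
          mul_le_mul_of_nonneg_right (min_le_right _ _) hS
      _ = (n : ℝ)⁻¹ * ∑ l, w l ^ 2 := by simp [Real.rpow_neg_one]
      _ ≤ (n : ℝ)⁻¹ * (n * lpNorm ⊤ w ^ 2) := by gcongr
      _ = _ := by field_simp
  have hp1 : 1 ≤ p.toReal := by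
    have := (ENNReal.toReal_le_toReal ENNReal.one_ne_top hp).2 (Fact.out : 1 ≤ p)
    simpa using this
  set q := p.toReal with hq
  have hq0 : 0 < q := by linarith
  set N := lpNorm p w with hN
  have hNq : N ^ q = ∑ l, |w l| ^ q := by
    have h : N = (∑ l, |w l| ^ q) ^ (1 / q) := by
      rw [hN, lpNorm, PiLp.norm_eq_sum hq0]
      simp [hq]
    rw [h, ← Real.rpow_mul (Finset.sum_nonneg fun l _ => by positivity)]
    rw [one_div_mul_cancel hq0.ne', Real.rpow_one]
  rcases le_total q 2 with h2 | h2
  · refine (mul_le_mul_of_nonneg_right (min_le_left _ _) hS).trans ?_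
    rw [one_mul]
    rcases hN0.eq_or_lt with h0 | h0
    · have : ∀ l, w l = 0 := fun l => by
        have := hc l
        rw [← h0] at this
        exact abs_nonpos_iff.1 this
      simp [this, sq_nonneg]
    calc ∑ l, w l ^ 2 ≤ ∑ l, |w l| ^ q * N ^ (2 - q) := by
          refine Finset.sum_le_sum fun l _ => ?_
          rcases (abs_nonneg (w l)).eq_or_lt with h | h
          · have : w l = 0 := abs_eq_zero.1 h.symm
            rw [this]
            simp only [ne_eq, OfNat.ofNat_ne_zero, not_false_eq_true, zero_pow]
            positivity
          · have : w l ^ 2 = |w l| ^ q * |w l| ^ (2 - q) := by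
              rw [← Real.rpow_add h, ← sq_abs, ← Real.rpow_natCast]
              congr 1
              push_cast
              ring
            rw [this]
            refine mul_le_mul_of_nonneg_left ?_ (by positivity)
            exact Real.rpow_le_rpow h.le (hc l) (by linarith)
      _ = N ^ 2 := by
          rw [← Finset.sum_mul, ← hNq, ← Real.rpow_add h0, ← Real.rpow_natCast]
          congr 1
          push_cast
          ring
  · refine (mul_le_mul_of_nonneg_right (min_le_right _ _) hS).trans ?_
    have h := Real.rpow_sum_le_const_mul_sum_rpow Finset.univ (fun l => w l ^ 2)
      (p := q / 2) (by linarith)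
    have e : ∀ l, |w l ^ 2| ^ (q / 2) = |w l| ^ q := fun l => by
      rw [abs_pow, ← Real.rpow_natCast, ← Real.rpow_mul (abs_nonneg _)]
      congr 1
      push_cast
      ring
    simp only [e, ← hNq, Finset.card_univ, Fintype.card_fin] at h
    have ea : ∀ l, |w l ^ 2| = w l ^ 2 := fun l => abs_of_nonneg (sq_nonneg (w l))
    simp only [ea] at h
    have h' := Real.rpow_le_rpow (by positivity) h (show 0 ≤ 2 / q by positivity)
    rw [← Real.rpow_mul hS, Real.mul_rpow (by positivity) (by positivity),
      ← Real.rpow_mul hn'.le, ← Real.rpow_mul hN0] at h'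
    have e1 : q / 2 * (2 / q) = 1 := by field_simp
    have e2 : (q / 2 - 1) * (2 / q) = -(2 / q - 1) := by field_simp; ring
    have e3 : q * (2 / q) = ((2 : ℕ) : ℝ) := by field_simp; norm_num
    rw [e1, e2, e3, Real.rpow_one, Real.rpow_natCast, Real.rpow_neg hn'.le] at h'
    have hpos : 0 < (n : ℝ) ^ (2 / q - 1) := Real.rpow_pos_of_pos hn' _
    calc _ ≤ _ := mul_le_mul_of_nonneg_left h' hpos.le
      _ = _ := by field_simp

/-- With `μᵗ − μᵗ⁻¹ = τ(Q ⊗ Iₙ)xᵗ`, a consensual `x⋆` and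
`σ = min{1, n^{2/p−1}}`, one has
`∑ᵢ ‖xᵢᵗ − xᵢ⋆‖ₚ² − (σ/τ²)‖μᵗ − μᵗ⁻¹‖₂² ≥ 0`. -/
theorem dual_increment_bound {m n : ℕ} (p : ENNReal) [Fact (1 ≤ p)]
    (P : Matrix (Fin m) (Fin m) ℝ)
    (hsym : P.IsSymm) (hnn : ∀ i j, 0 ≤ P i j)
    (hrow : ∀ i, ∑ j, P i j = 1) (hpsd : P.PosSemidef)
    (hirr : ∀ i j, ∃ k : ℕ, 0 < (P ^ k) i j)
    (X : Set (Fin n → ℝ)) (τ : ℝ) (hτ : 0 < τ)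
    (xt xs μt μtm1 : Fin m → (Fin n → ℝ))
    (hxtX : ∀ i, xt i ∈ X) (hxsX : ∀ i, xs i ∈ X)
    (hcons : ∀ i j, xs i = xs j)
    (hμ : ∀ i, μt i - μtm1 i = τ • (xt i - ∑ j, P i j • xt j)) :
    ∑ i, lpNorm p (xt i - xs i) ^ 2 -
        min 1 ((n : ℝ) ^ (2 / p.toReal - 1)) / τ ^ 2 *
          ∑ i, ∑ l, (μt i l - μtm1 i l) ^ 2 ≥ 0 := by
  set σ := min 1 ((n : ℝ) ^ (2 / p.toReal - 1)) with hσ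
  have hσ0 : 0 ≤ σ := le_min zero_le_one (Real.rpow_nonneg (Nat.cast_nonneg _) _)
  have hd : ∀ i l, μt i l - μtm1 i l
      = τ * ((xt i l - xs i l) - ∑ j, P i j * (xt j l - xs j l)) := fun i l => by
    have h := congrFun (hμ i) l
    simp only [Pi.sub_apply, Pi.smul_apply, Finset.sum_apply, smul_eq_mul] at h
    have h2 : ∑ j, P i j * (xt j l - xs j l) = ∑ j, P i j * xt j l - xs i l := by
      simp only [mul_sub, Finset.sum_sub_distrib]
      congr 1
      rw [Finset.sum_congr rfl (fun j _ => by rw [hcons j i]), ← Finset.sum_mul, hrow, one_mul]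
    rw [h, h2]
    ring
  have key : ∑ i, ∑ l, (μt i l - μtm1 i l) ^ 2
      ≤ τ ^ 2 * ∑ i, ∑ l, (xt i l - xs i l) ^ 2 := by
    simp only [hd, mul_pow, ← Finset.mul_sum]
    refine mul_le_mul_of_nonneg_left ?_ (sq_nonneg _)
    rw [Finset.sum_comm, Finset.sum_comm (f := fun i l => (xt i l - xs i l) ^ 2)]
    exact Finset.sum_le_sum fun l _ =>
      aux_contract P hsym hnn hrow hpsd (fun i => xt i l - xs i l)
  have hfin : σ * ∑ i, ∑ l, (xt i l - xs i l) ^ 2 ≤ ∑ i, lpNorm p (xt i - xs i) ^ 2 := by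
    rw [Finset.mul_sum]
    exact Finset.sum_le_sum fun i _ => aux_norm p (xt i - xs i)
  have h3 := mul_le_mul_of_nonneg_left key (show 0 ≤ σ / τ ^ 2 by positivity)
  have h4 : σ / τ ^ 2 * (τ ^ 2 * ∑ i, ∑ l, (xt i l - xs i l) ^ 2)
      = σ * ∑ i, ∑ l, (xt i l - xs i l) ^ 2 := by field_simp
  linarith
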